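/- Let Ω ⊂ ℝ^d be a set, let μ be a Borel probability measure on ℝ^d, and let X_1,…,X_n be i.i.d. random points with law μ. Let h_n denote the fill distance of {X_1,…,X_n} with respect to Ω. Let ε > 0 and let F_ε ⊂ Ω be any finite set such that Ω ⊆ ⋃_{x ∈ F_ε} B(x, ε), where B(x,ε) is the open ball of radius ε centered at x. Then P( h_n ≥ 2ε ) ≤ Σ_{x ∈ F_ε} ( 1 − μ(B(x, ε)) )^n. -/

import Mathlib

/-!
A point of `Ω` is within `ε` of some centre `x ∈ F`, so if every centre is at distance less than `δ`
from the sample, then the fill distance is less than `ε + δ`; the inequality stays strict because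
`F` is finite. Hence a fill distance of at least `ε + δ` forces some ball `B(x, δ)` to contain no
sample point, an event of probability `∏ i, (1 - μ i (B(x, δ)))` by independence. A union bound
over `F` concludes.
-/

open MeasureTheory Metric
open scoped ENNReal

/-- Fill distance of the sample `X` with respect to the set `Ω`. -/
noncomputable def fillDist {d n : ℕ} (Ω : Set (EuclideanSpace ℝ (Fin d)))
    (X : Fin n → EuclideanSpace ℝ (Fin d)) : ℝ :=
  ⨆ x ∈ Ω, ⨅ i, dist x (X i)

section CoveringRadius

open scoped Topology

variable {E : Type*} [PseudoMetricSpace E]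

theorem infDist_range {ι : Type*} (X : ι → E) (x : E) :
    infDist x (Set.range X) = ⨅ i, dist x (X i) := by
  rw [infDist_eq_iInf, iInf_range' (dist x) X]

/-- The covering radius of `s` with respect to `Ω`: the fill distance of an arbitrary set `s` in an
arbitrary pseudometric space. It is real-valued, hence `0` by convention when the distances are
unbounded or `s` is empty. -/
noncomputable def coveringRadius (Ω s : Set E) : ℝ :=
  ⨆ x ∈ Ω, infDist x s

theorem fillDist_eq_coveringRadius {d n : ℕ} (Ω : Set (EuclideanSpace ℝ (Fin d)))
    (X : Fin n → EuclideanSpace ℝ (Fin d)) :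
    fillDist Ω X = coveringRadius Ω (Set.range X) := by
  simp only [fillDist, coveringRadius, infDist_range]

theorem coveringRadius_le {Ω s : Set E} {r : ℝ} (hr : 0 ≤ r) (h : ∀ x ∈ Ω, infDist x s ≤ r) :
    coveringRadius Ω s ≤ r :=
  Real.iSup_le (fun x => Real.iSup_le (h x) hr) hr

theorem coveringRadius_le_add {Ω s F : Set E} {ε r : ℝ} (hr : 0 ≤ ε + r)
    (hcover : Ω ⊆ ⋃ x ∈ F, closedBall x ε) (hF : ∀ x ∈ F, infDist x s ≤ r) :
    coveringRadius Ω s ≤ ε + r := by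
  refine coveringRadius_le hr fun y hy => ?_
  obtain ⟨x, hx, hyx⟩ := Set.mem_iUnion₂.1 (hcover hy)
  calc
    infDist y s ≤ infDist x s + dist y x := infDist_le_infDist_add_dist
    _ ≤ r + ε := add_le_add (hF x hx) hyx
    _ = ε + r := add_comm r ε

theorem coveringRadius_lt_add {Ω s : Set E} {F : Finset E} {ε δ : ℝ} (hpos : 0 < ε + δ)
    (hcover : Ω ⊆ ⋃ x ∈ F, closedBall x ε) (hF : ∀ x ∈ F, infDist x s < δ) :
    coveringRadius Ω s < ε + δ := by
  have hF_near : ∀ᶠ r in 𝓝[<] δ, ∀ x ∈ F, infDist x s ≤ r :=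
    (F.eventually_all).2 fun x hx =>
      ((lt_mem_nhds (hF x hx)).mono fun _ => le_of_lt).filter_mono nhdsWithin_le_nhds
  have hpos_near : ∀ᶠ r in 𝓝[<] δ, -ε < r :=
    (lt_mem_nhds (neg_lt_iff_pos_add'.2 hpos)).filter_mono nhdsWithin_le_nhds
  obtain ⟨r, hFr, hεr, hrδ⟩ :=
    (hF_near.and (hpos_near.and eventually_mem_nhdsWithin)).exists
  calc
    coveringRadius Ω s ≤ ε + r :=
      coveringRadius_le_add (neg_lt_iff_pos_add'.1 hεr).le hcover hFr
    _ < ε + δ := by gcongr; exact hrδ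

theorem setOf_add_le_coveringRadius_subset {ι : Type*} {Ω : Set E} {F : Finset E} {ε δ : ℝ}
    (hpos : 0 < ε + δ) (hcover : Ω ⊆ ⋃ x ∈ F, closedBall x ε) :
    {X : ι → E | ε + δ ≤ coveringRadius Ω (Set.range X)} ⊆
      ⋃ x ∈ F, Set.univ.pi fun _ => (ball x δ)ᶜ := by
  intro X hX
  obtain ⟨x, hxF, hx⟩ : ∃ x ∈ F, δ ≤ infDist x (Set.range X) := by
    contrapose! hX
    exact (coveringRadius_lt_add hpos hcover hX).not_ge
  refine Set.mem_iUnion₂.2 ⟨x, hxF, fun i _ hi => ?_⟩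
  exact (hx.trans (infDist_le_dist_of_mem (Set.mem_range_self i))).not_gt (mem_ball'.1 hi)

end CoveringRadius

section Probability

variable {ι : Type*} [Fintype ι]

theorem measure_pi_univ_pi_compl {α : ι → Type*} [∀ i, MeasurableSpace (α i)]
    (μ : ∀ i, Measure (α i)) [∀ i, IsProbabilityMeasure (μ i)] {s : ∀ i, Set (α i)}
    (hs : ∀ i, MeasurableSet (s i)) :
    Measure.pi μ (Set.univ.pi fun i => (s i)ᶜ) = ∏ i, (1 - μ i (s i)) := by
  simp only [Measure.pi_pi, prob_compl_eq_one_sub (hs _)]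

theorem fillDist_covering_bound_general {E : Type*} [PseudoMetricSpace E] [MeasurableSpace E]
    [OpensMeasurableSpace E] (μ : ι → Measure E) [∀ i, IsProbabilityMeasure (μ i)]
    {Ω : Set E} {F : Finset E} {ε δ : ℝ} (hpos : 0 < ε + δ)
    (hcover : Ω ⊆ ⋃ x ∈ F, closedBall x ε) :
    Measure.pi μ {X | ε + δ ≤ coveringRadius Ω (Set.range X)}
      ≤ ∑ x ∈ F, ∏ i, (1 - μ i (ball x δ)) :=
  calc
    Measure.pi μ {X | ε + δ ≤ coveringRadius Ω (Set.range X)}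
      ≤ Measure.pi μ (⋃ x ∈ F, Set.univ.pi fun _ => (ball x δ)ᶜ) :=
        measure_mono (setOf_add_le_coveringRadius_subset hpos hcover)
    _ ≤ ∑ x ∈ F, Measure.pi μ (Set.univ.pi fun _ => (ball x δ)ᶜ) :=
        measure_biUnion_finset_le F _
    _ = ∑ x ∈ F, ∏ i, (1 - μ i (ball x δ)) :=
        Finset.sum_congr rfl fun _ _ => measure_pi_univ_pi_compl μ fun _ => measurableSet_ball

end Probability

/-- the union-bound covering estimate for the fill distance. If the finite set
`F_ε ⊆ Ω` is an `ε`-cover of `Ω`, then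
`P(h_n ≥ 2ε) ≤ Σ_{x ∈ F_ε} (1 − μ(B(x,ε)))^n`. -/
theorem fillDist_covering_bound {d n : ℕ}
    (Ω : Set (EuclideanSpace ℝ (Fin d)))
    (μ : Measure (EuclideanSpace ℝ (Fin d))) [IsProbabilityMeasure μ]
    (ε : ℝ) (hε : 0 < ε)
    (F : Finset (EuclideanSpace ℝ (Fin d)))
    (hFΩ : ↑F ⊆ Ω)
    (hcover : Ω ⊆ ⋃ x ∈ F, ball x ε) :
    (Measure.pi fun _ : Fin n => μ) {X | 2 * ε ≤ fillDist Ω X}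
      ≤ ∑ x ∈ F, (1 - μ (ball x ε)) ^ n := by
  simpa [fillDist_eq_coveringRadius, two_mul] using fillDist_covering_bound_general
    (fun _ : Fin n => μ) (add_pos hε hε)
    (hcover.trans (Set.iUnion₂_mono fun _ _ => ball_subset_closedBall))
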